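/- Level-two variance contraction from local expansion: Let 2 ≤ k ≤ d, let S ∈ 𝒞(k−2), and suppose λ₂(G_S) ≤ a for some real a with −1 < a < 1. Then for every g : 𝒞_S(2) → ℝ, Var_{π_{S,2}}(g) ≥ (2/(1 + a)) · Var_{π_{S,1}}(P_{S,1}^↑ g). -/

import Mathlib

/-!
The argument takes place in the link of `S`, between the vertex level `L²(π_{S,1})` and the edge
level `L²(π_{S,2})`. Counting top faces in two ways gives
`Σ_{T ⊇ R} π_{S,2}(T) = 2 π_{S,1}(R)` (`sum_linkPi_two_above`); consequently the up operator `U`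
and the down operator `D` are mutually adjoint (`linkUp_adjoint`).

For a mean-zero function `f` on vertices, `⟨f, G_S f⟩ = 2 ‖D f‖² - ‖f‖²`, so `λ₂(G_S) ≤ a` says
`‖D f‖² ≤ (1 + a)/2 ‖f‖²` (`norm_downOp_le_of_lamTwo_le`). Here the supremum defining `λ₂` is over
a bounded set because `D` is a contraction by convexity of the square (`norm_downOp_le`).
Given `g` of mean zero, put `f = U g`; then `⟨D f, g⟩ = ‖f‖²`, and expanding
`0 ≤ ‖g - t D f‖²` at `t = 2/(1 + a)` gives `‖g‖² ≥ 2/(1 + a) ‖f‖²`. Centring reduces the general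
case to this one, since `U` fixes constants and preserves means.
-/

open Finset

noncomputable section

variable {E : Type*} [Fintype E] [DecidableEq E]

/-- The faces of cardinality `k` of the set family `C`. -/
def faces (C : Finset (Finset E)) (k : ℕ) : Finset (Finset E) :=
  C.filter fun S => S.card = k

/-- `C` is a pure simplicial complex of dimension `d`: it is nonempty, closed under
taking subsets, and every face is contained in a face of cardinality `d`
(hence all maximal faces have cardinality `d`). -/
def IsPureComplex (C : Finset (Finset E)) (d : ℕ) : Prop :=
  C.Nonempty ∧ (∀ S ∈ C, ∀ T ⊆ S, T ∈ C) ∧ (∀ S ∈ C, ∃ T ∈ C, S ⊆ T ∧ T.card = d)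

/-- `pid` is a probability distribution with full support on the top level faces. -/
def IsTopDist (C : Finset (Finset E)) (d : ℕ) (pid : Finset E → ℝ) : Prop :=
  (∀ T ∈ faces C d, 0 < pid T) ∧ ∑ T ∈ faces C d, pid T = 1

/-- The (unnormalised) weight of a face: total top-level mass above it. -/
def wgt (C : Finset (Finset E)) (d : ℕ) (pid : Finset E → ℝ) (S : Finset E) : ℝ :=
  ∑ T ∈ (faces C d).filter (fun T => S ⊆ T), pid T

/-- The distribution `π_k` at level `k`: `π_k(S) ∝ Σ_{T ∈ C(d), T ⊇ S} π_d(T)`. -/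
def piLev (C : Finset (Finset E)) (d : ℕ) (pid : Finset E → ℝ) (k : ℕ) (S : Finset E) : ℝ :=
  if S ∈ faces C k then wgt C d pid S / ∑ T ∈ faces C k, wgt C d pid T else 0

/-- The level-`k` faces of the link of the face `S`. -/
def linkFaces (C : Finset (Finset E)) (S : Finset E) (k : ℕ) : Finset (Finset E) :=
  Finset.univ.powerset.filter fun T => S ∩ T = ∅ ∧ S ∪ T ∈ C ∧ T.card = k

/-- The distribution `π_{S,k}` on the level-`k` faces of the link of `S`:
`π_{S,k}(T) ∝ π_{|S|+k}(S ∪ T)`. -/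
def linkPi (C : Finset (Finset E)) (d : ℕ) (pid : Finset E → ℝ) (S : Finset E) (k : ℕ)
    (T : Finset E) : ℝ :=
  if T ∈ linkFaces C S k then
    piLev C d pid (S.card + k) (S ∪ T) /
      ∑ T' ∈ linkFaces C S k, piLev C d pid (S.card + k) (S ∪ T')
  else 0

/-- Generic up operator with respect to a measure `ν` on a collection `dom` of faces:
from `R` move to a superset `T ∈ dom` with probability proportional to `ν T`.
Acts on functions on `dom`, producing a function on the level below. -/
def upWith (ν : Finset E → ℝ) (dom : Finset (Finset E)) (f : Finset E → ℝ) (R : Finset E) : ℝ :=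
  ∑ T ∈ dom.filter (fun T => R ⊆ T),
    (ν T / ∑ T' ∈ dom.filter (fun T' => R ⊆ T'), ν T') * f T

/-- The up operator `P_k^↑`, acting on functions on `C(k+1)` and producing a function
on `C(k)`. -/
def upOp (C : Finset (Finset E)) (d : ℕ) (pid : Finset E → ℝ) (k : ℕ) :
    (Finset E → ℝ) → Finset E → ℝ :=
  upWith (piLev C d pid (k+1)) (faces C (k+1))

/-- The down operator `P_k^↓` (uniform removal of an element), acting on functions
on `C(k-1)` and producing a function on `C(k)`. -/
def downOp (k : ℕ) (g : Finset E → ℝ) (S : Finset E) : ℝ :=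
  (1 / (k : ℝ)) * ∑ i ∈ S, g (S.erase i)

/-- The down-up walk `P_k^∨ = P_k^↓ P_{k-1}^↑` on `C(k)`, as an operator on functions. -/
def downUp (C : Finset (Finset E)) (d : ℕ) (pid : Finset E → ℝ) (k : ℕ)
    (f : Finset E → ℝ) : Finset E → ℝ :=
  downOp k (upOp C d pid (k-1) f)

/-- The up-down walk `P_k^∧ = P_k^↑ P_{k+1}^↓` on `C(k)`, as an operator on functions. -/
def upDown (C : Finset (Finset E)) (d : ℕ) (pid : Finset E → ℝ) (k : ℕ)
    (f : Finset E → ℝ) : Finset E → ℝ :=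
  upOp C d pid k (downOp (k+1) f)

/-- The up operator `P_{S,k}^↑` on the link of `S`, acting on functions on `C_S(k+1)`
and producing a function on `C_S(k)`. -/
def linkUp (C : Finset (Finset E)) (d : ℕ) (pid : Finset E → ℝ) (S : Finset E) (k : ℕ) :
    (Finset E → ℝ) → Finset E → ℝ :=
  upWith (linkPi C d pid S (k+1)) (linkFaces C S (k+1))

/-- The up-down walk `P_{S,k}^∧` on the level-`k` faces of the link of `S`. -/
def linkUpDown (C : Finset (Finset E)) (d : ℕ) (pid : Finset E → ℝ) (S : Finset E) (k : ℕ)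
    (f : Finset E → ℝ) : Finset E → ℝ :=
  linkUp C d pid S k (downOp (k+1) f)

/-- The local walk `G_S := 2 P_{S,1}^∧ - I` on the vertices of the link of `S`. -/
def localWalk (C : Finset (Finset E)) (d : ℕ) (pid : Finset E → ℝ) (S : Finset E)
    (f : Finset E → ℝ) (T : Finset E) : ℝ :=
  2 * linkUpDown C d pid S 1 f T - f T

/-- Variance of `f` with respect to the measure `μ` on `dom`. -/
def pVar (μ : Finset E → ℝ) (dom : Finset (Finset E)) (f : Finset E → ℝ) : ℝ :=
  (∑ x ∈ dom, μ x * f x ^ 2) - (∑ x ∈ dom, μ x * f x) ^ 2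

/-- Relative entropy `Ent_μ(f) = E_μ[f log f] - E_μ[f] log E_μ[f]` of `f` with respect to
the measure `μ` on `dom` (note `Real.log 0 = 0`, giving the convention `0 log 0 = 0`). -/
def pEnt (μ : Finset E → ℝ) (dom : Finset (Finset E)) (f : Finset E → ℝ) : ℝ :=
  (∑ x ∈ dom, μ x * (f x * Real.log (f x))) -
    (∑ x ∈ dom, μ x * f x) * Real.log (∑ x ∈ dom, μ x * f x)

/-- The Dirichlet form `𝔈_P(f,g) = Σ_x μ(x) f(x) ((I - P) g)(x)` of a Markov operator `P`
reversible with respect to `μ` on `dom`. -/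
def pDiri (μ : Finset E → ℝ) (dom : Finset (Finset E))
    (P : (Finset E → ℝ) → Finset E → ℝ) (f g : Finset E → ℝ) : ℝ :=
  ∑ x ∈ dom, μ x * f x * (g x - P g x)

/-- The second largest eigenvalue of a Markov operator `P` reversible with respect to the
distribution `μ` on `dom`, via the variational characterisation: the supremum of Rayleigh
quotients `⟨f, Pf⟩_μ / ⟨f, f⟩_μ` over `f` orthogonal to the constants in `L²(μ)`. -/
noncomputable def lamTwo (μ : Finset E → ℝ) (dom : Finset (Finset E))
    (P : (Finset E → ℝ) → Finset E → ℝ) : ℝ :=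
  sSup {r : ℝ | ∃ f : Finset E → ℝ,
    (∑ x ∈ dom, μ x * f x = 0) ∧ (∑ x ∈ dom, μ x * f x ^ 2 ≠ 0) ∧
    r = (∑ x ∈ dom, μ x * f x * P f x) / ∑ x ∈ dom, μ x * f x ^ 2}

/-- The modified log-Sobolev constant `ρ(P)` of a Markov operator `P` reversible with
respect to `μ` on `dom`. -/
noncomputable def mlsConst (μ : Finset E → ℝ) (dom : Finset (Finset E))
    (P : (Finset E → ℝ) → Finset E → ℝ) : ℝ :=
  sInf {r : ℝ | ∃ f : Finset E → ℝ, (∀ x ∈ dom, 0 < f x) ∧ pEnt μ dom f ≠ 0 ∧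
    r = pDiri μ dom P f (fun x => Real.log (f x)) / pEnt μ dom f}

/-! ### Weights and distributions on a link -/

theorem mem_linkFaces {C : Finset (Finset E)} {S T : Finset E} {k : ℕ} :
    T ∈ linkFaces C S k ↔ S ∩ T = ∅ ∧ S ∪ T ∈ C ∧ T.card = k := by
  simp [linkFaces]

theorem wgt_pos {C : Finset (Finset E)} {d : ℕ} {pid : Finset E → ℝ}
    (hC : IsPureComplex C d) (hpid : IsTopDist C d pid) {S : Finset E} (hS : S ∈ C) :
    0 < wgt C d pid S := by
  obtain ⟨T, hT, hST, hc⟩ := hC.2.2 S hS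
  apply Finset.sum_pos
  · intro T hT
    exact hpid.1 T (Finset.mem_filter.1 hT).1
  · exact ⟨T, by simp [faces, hT, hST, hc]⟩

/-- The normalisation of `piLev` cancels in `linkPi`. -/
theorem linkPi_eq {C : Finset (Finset E)} {d : ℕ} {pid : Finset E → ℝ}
    (hC : IsPureComplex C d) (hpid : IsTopDist C d pid) {S T : Finset E} {k : ℕ}
    (hT : T ∈ linkFaces C S k) :
    linkPi C d pid S k T =
      wgt C d pid (S ∪ T) / ∑ T' ∈ linkFaces C S k, wgt C d pid (S ∪ T') := by
  have hmem : ∀ T' ∈ linkFaces C S k, S ∪ T' ∈ faces C (S.card + k) := by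
    intro T' hT'
    obtain ⟨h1, h2, h3⟩ := mem_linkFaces.1 hT'
    have hd : Disjoint S T' := Finset.disjoint_iff_inter_eq_empty.2 h1
    simp [faces, h2, Finset.card_union_of_disjoint hd, h3]
  have hZ : 0 < ∑ T ∈ faces C (S.card + k), wgt C d pid T := by
    apply Finset.sum_pos
    · intro T hT
      exact wgt_pos hC hpid (Finset.mem_filter.1 hT).1
    · exact ⟨_, hmem T hT⟩
  have hpi : ∀ T' ∈ linkFaces C S k, piLev C d pid (S.card + k) (S ∪ T') =
      wgt C d pid (S ∪ T') / ∑ T ∈ faces C (S.card + k), wgt C d pid T := by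
    intro T' hT'
    rw [piLev, if_pos (hmem T' hT')]
  rw [linkPi, if_pos hT, Finset.sum_congr rfl hpi, hpi T hT, ← Finset.sum_div,
    div_div_div_cancel_right₀ hZ.ne']

theorem sum_wgt_pos {C : Finset (Finset E)} {d : ℕ} {pid : Finset E → ℝ}
    (hC : IsPureComplex C d) (hpid : IsTopDist C d pid) {S T : Finset E} {k : ℕ}
    (hT : T ∈ linkFaces C S k) :
    0 < ∑ T' ∈ linkFaces C S k, wgt C d pid (S ∪ T') :=
  Finset.sum_pos (fun _ h => wgt_pos hC hpid (mem_linkFaces.1 h).2.1) ⟨T, hT⟩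

theorem linkPi_pos {C : Finset (Finset E)} {d : ℕ} {pid : Finset E → ℝ}
    (hC : IsPureComplex C d) (hpid : IsTopDist C d pid) {S T : Finset E} {k : ℕ}
    (hT : T ∈ linkFaces C S k) : 0 < linkPi C d pid S k T := by
  rw [linkPi_eq hC hpid hT]
  exact div_pos (wgt_pos hC hpid (mem_linkFaces.1 hT).2.1) (sum_wgt_pos hC hpid hT)

theorem sum_linkPi {C : Finset (Finset E)} {d : ℕ} {pid : Finset E → ℝ}
    (hC : IsPureComplex C d) (hpid : IsTopDist C d pid) {S T : Finset E} {k : ℕ}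
    (hT : T ∈ linkFaces C S k) : ∑ T' ∈ linkFaces C S k, linkPi C d pid S k T' = 1 := by
  rw [Finset.sum_congr rfl fun T' hT' => linkPi_eq hC hpid hT', ← Finset.sum_div,
    div_self (sum_wgt_pos hC hpid hT).ne']

/-! ### Incidences between vertices and edges of a link -/

/-- The vertices below an edge `T` of the link are exactly the sets `T.erase i`, `i ∈ T`. -/
theorem sum_linkFaces_below {C : Finset (Finset E)} {d : ℕ} (hC : IsPureComplex C d)
    {S T : Finset E} (hT : T ∈ linkFaces C S 2) (φ : Finset E → ℝ) :
    ∑ R ∈ (linkFaces C S 1).filter (fun R => R ⊆ T), φ R = ∑ i ∈ T, φ (T.erase i) := by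
  obtain ⟨h1, h2, h3⟩ := mem_linkFaces.1 hT
  have himg : (linkFaces C S 1).filter (fun R => R ⊆ T) = T.image T.erase := by
    ext R
    simp only [Finset.mem_filter, mem_linkFaces, Finset.mem_image]
    constructor
    · rintro ⟨⟨-, -, hc⟩, hRT⟩
      have hcard : (T \ R).card = 1 := by rw [Finset.card_sdiff_of_subset hRT]; omega
      obtain ⟨i, hi⟩ := Finset.card_eq_one.1 hcard
      have hiT : i ∈ T \ R := by simp [hi]
      refine ⟨i, (Finset.mem_sdiff.1 hiT).1, ?_⟩
      rw [Finset.erase_eq, ← hi, Finset.sdiff_sdiff_eq_self hRT]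
    · rintro ⟨i, hi, rfl⟩
      refine ⟨⟨?_, ?_, ?_⟩, Finset.erase_subset _ _⟩
      · exact Finset.subset_empty.1
          ((Finset.inter_subset_inter_left (Finset.erase_subset _ _)).trans h1.subset)
      · exact hC.2.1 _ h2 _ (Finset.union_subset_union_right (Finset.erase_subset _ _))
      · rw [Finset.card_erase_of_mem hi, h3]
  rw [himg, Finset.sum_image]
  exact Finset.erase_injOn T

theorem sum_vertex_edge {C : Finset (Finset E)} {d : ℕ} (hC : IsPureComplex C d)
    {S : Finset E} (φ : Finset E → Finset E → ℝ) :
    ∑ R ∈ linkFaces C S 1, ∑ T ∈ (linkFaces C S 2).filter (fun T => R ⊆ T), φ R T =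
      ∑ T ∈ linkFaces C S 2, ∑ i ∈ T, φ (T.erase i) T := by
  rw [Finset.sum_comm' (t' := linkFaces C S 2)
    (s' := fun T => (linkFaces C S 1).filter (fun R => R ⊆ T))]
  · exact Finset.sum_congr rfl fun T hT => sum_linkFaces_below hC hT fun R => φ R T
  · intro R T
    simp only [Finset.mem_filter]
    tauto

/-- A top face `U` above `S ∪ R` contains `S ∪ T` for exactly `d - |S| - 1` edges `T ⊇ R`,
one for each element of `U` outside `S ∪ R`. -/
theorem sum_wgt_above {C : Finset (Finset E)} {d : ℕ} {pid : Finset E → ℝ}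
    (hC : IsPureComplex C d) {S R : Finset E} (hR : R ∈ linkFaces C S 1) :
    ∑ T ∈ (linkFaces C S 2).filter (fun T => R ⊆ T), wgt C d pid (S ∪ T) =
      ((d - (S.card + 1) : ℕ) : ℝ) * wgt C d pid (S ∪ R) := by
  obtain ⟨h1, h2, h3⟩ := mem_linkFaces.1 hR
  have hSR : (S ∪ R).card = S.card + 1 := by
    rw [Finset.card_union_of_disjoint (Finset.disjoint_iff_inter_eq_empty.2 h1), h3]
  unfold wgt
  rw [Finset.sum_comm' (t' := (faces C d).filter (fun U => S ∪ R ⊆ U))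
    (s' := fun U => (linkFaces C S 2).filter (fun T => R ⊆ T ∧ S ∪ T ⊆ U))]
  · rw [Finset.mul_sum]
    apply Finset.sum_congr rfl
    intro U hU
    simp only [Finset.mem_filter, faces] at hU
    obtain ⟨⟨hUC, hUd⟩, hSRU⟩ := hU
    rw [Finset.sum_const, nsmul_eq_mul]
    congr 2
    rw [← hUd, ← hSR, ← Finset.card_sdiff_of_subset hSRU]
    symm
    apply Finset.card_bij (fun i _ => insert i R)
    · intro i hi
      simp only [Finset.mem_sdiff, Finset.mem_union, not_or] at hi
      obtain ⟨hiU, hiS, hiR⟩ := hi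
      have hsub : S ∪ insert i R ⊆ U := by
        rw [Finset.union_insert]
        exact Finset.insert_subset hiU hSRU
      simp only [Finset.mem_filter, mem_linkFaces]
      refine ⟨⟨?_, hC.2.1 U hUC _ hsub, ?_⟩, Finset.subset_insert _ _, hsub⟩
      · rw [Finset.inter_insert_of_notMem hiS, h1]
      · rw [Finset.card_insert_of_notMem hiR, h3]
    · intro i hi j hj hij
      simp only [Finset.mem_sdiff, Finset.mem_union, not_or] at hi hj
      have : i ∈ insert j R := hij ▸ Finset.mem_insert_self i R
      exact (Finset.mem_insert.1 this).resolve_right hi.2.2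
    · intro T hT
      simp only [Finset.mem_filter, mem_linkFaces] at hT
      obtain ⟨⟨hd, -, hc⟩, hRT, hTU⟩ := hT
      have hcard : (T \ R).card = 1 := by rw [Finset.card_sdiff_of_subset hRT]; omega
      obtain ⟨i, hi⟩ := Finset.card_eq_one.1 hcard
      have hiT : i ∈ T \ R := by simp [hi]
      rw [Finset.mem_sdiff] at hiT
      have hiS : i ∉ S := fun h => by
        have : i ∈ S ∩ T := Finset.mem_inter.2 ⟨h, hiT.1⟩
        simp [hd] at this
      refine ⟨i, ?_, ?_⟩
      · simp only [Finset.mem_sdiff, Finset.mem_union, not_or]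
        exact ⟨hTU (Finset.mem_union_right _ hiT.1), hiS, hiT.2⟩
      · rw [Finset.insert_eq, ← hi, Finset.sdiff_union_of_subset hRT]
  · intro T U
    simp only [Finset.mem_filter]
    constructor
    · rintro ⟨⟨hT, hRT⟩, hU, hTU⟩
      exact ⟨⟨hT, hRT, hTU⟩, hU, (Finset.union_subset_union_right hRT).trans hTU⟩
    · rintro ⟨⟨hT, hRT, hTU⟩, hU, -⟩
      exact ⟨⟨hT, hRT⟩, hU, hTU⟩

/-- The vertex distribution is the image of the edge distribution under a uniform removal. -/
theorem sum_linkPi_two_above {C : Finset (Finset E)} {d : ℕ} {pid : Finset E → ℝ}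
    (hC : IsPureComplex C d) (hpid : IsTopDist C d pid) {S R : Finset E}
    (hd : S.card + 2 ≤ d) (hR : R ∈ linkFaces C S 1) :
    ∑ T ∈ (linkFaces C S 2).filter (fun T => R ⊆ T), linkPi C d pid S 2 T =
      2 * linkPi C d pid S 1 R := by
  have hm : (0 : ℝ) < ((d - (S.card + 1) : ℕ) : ℝ) := by
    exact_mod_cast (by omega : 0 < d - (S.card + 1))
  have hW1 := sum_wgt_pos hC hpid hR
  -- Summing over all vertices compares the two normalising constants: `m W₁ = 2 W₂`.
  have hW : ((d - (S.card + 1) : ℕ) : ℝ) * ∑ R ∈ linkFaces C S 1, wgt C d pid (S ∪ R) =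
      2 * ∑ T ∈ linkFaces C S 2, wgt C d pid (S ∪ T) := by
    rw [Finset.mul_sum, ← Finset.sum_congr rfl fun R hR => sum_wgt_above (pid := pid) hC hR,
      sum_vertex_edge hC fun _ T => wgt C d pid (S ∪ T), Finset.mul_sum]
    apply Finset.sum_congr rfl
    intro T hT
    rw [Finset.sum_const, (mem_linkFaces.1 hT).2.2, nsmul_eq_mul]
    norm_num
  have hW2 : 0 < ∑ T ∈ linkFaces C S 2, wgt C d pid (S ∪ T) := by
    have := mul_pos hm hW1
    linarith
  rw [Finset.sum_congr rfl fun T hT => linkPi_eq hC hpid (Finset.mem_filter.1 hT).1,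
    ← Finset.sum_div, sum_wgt_above hC hR, linkPi_eq hC hpid hR]
  rw [← mul_div_assoc, div_eq_div_iff hW2.ne' hW1.ne']
  linear_combination wgt C d pid (S ∪ R) * hW

/-! ### The up and down operators -/

/-- The up and down operators of the link are adjoint to each other. -/
theorem linkUp_adjoint {C : Finset (Finset E)} {d : ℕ} {pid : Finset E → ℝ}
    (hC : IsPureComplex C d) (hpid : IsTopDist C d pid) {S : Finset E}
    (hd : S.card + 2 ≤ d) (f h : Finset E → ℝ) :
    ∑ R ∈ linkFaces C S 1, linkPi C d pid S 1 R * f R * linkUp C d pid S 1 h R =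
      ∑ T ∈ linkFaces C S 2, linkPi C d pid S 2 T * downOp 2 f T * h T := by
  have key : ∀ R ∈ linkFaces C S 1,
      linkPi C d pid S 1 R * f R * linkUp C d pid S 1 h R =
        ∑ T ∈ (linkFaces C S 2).filter (fun T => R ⊆ T),
          1 / 2 * (linkPi C d pid S 2 T * f R * h T) := by
    intro R hR
    have hp := (linkPi_pos hC hpid hR).ne'
    simp only [linkUp, upWith, Nat.reduceAdd]
    rw [sum_linkPi_two_above hC hpid hd hR, Finset.mul_sum]
    apply Finset.sum_congr rfl
    intro T _
    field_simp
  rw [Finset.sum_congr rfl key,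
    sum_vertex_edge hC fun R T => 1 / 2 * (linkPi C d pid S 2 T * f R * h T)]
  apply Finset.sum_congr rfl
  intro T _
  simp only [downOp, Finset.mul_sum, Finset.sum_mul]
  apply Finset.sum_congr rfl
  intro i _
  push_cast
  ring

theorem downOp_const {C : Finset (Finset E)} {S T : Finset E} (hT : T ∈ linkFaces C S 2) (c : ℝ) :
    downOp 2 (fun _ => c) T = c := by
  simp [downOp, (mem_linkFaces.1 hT).2.2]

theorem linkUp_sub_const {C : Finset (Finset E)} {d : ℕ} {pid : Finset E → ℝ}
    (hC : IsPureComplex C d) (hpid : IsTopDist C d pid) {S R : Finset E}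
    (hd : S.card + 2 ≤ d) (hR : R ∈ linkFaces C S 1) (g : Finset E → ℝ) (c : ℝ) :
    linkUp C d pid S 1 (fun T => g T - c) R = linkUp C d pid S 1 g R - c := by
  have hp := linkPi_pos hC hpid hR
  simp only [linkUp, upWith, Nat.reduceAdd, mul_sub, Finset.sum_sub_distrib]
  rw [← Finset.sum_mul, ← Finset.sum_div, sum_linkPi_two_above hC hpid hd hR,
    div_self (by positivity), one_mul]

theorem sum_linkUp {C : Finset (Finset E)} {d : ℕ} {pid : Finset E → ℝ}
    (hC : IsPureComplex C d) (hpid : IsTopDist C d pid) {S : Finset E}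
    (hd : S.card + 2 ≤ d) (h : Finset E → ℝ) :
    ∑ R ∈ linkFaces C S 1, linkPi C d pid S 1 R * linkUp C d pid S 1 h R =
      ∑ T ∈ linkFaces C S 2, linkPi C d pid S 2 T * h T := by
  have := linkUp_adjoint hC hpid hd (fun _ => 1) h
  simp only [mul_one] at this
  rw [this]
  apply Finset.sum_congr rfl
  intro T hT
  rw [downOp_const hT, mul_one]

theorem sum_mul_localWalk {C : Finset (Finset E)} {d : ℕ} {pid : Finset E → ℝ}
    (hC : IsPureComplex C d) (hpid : IsTopDist C d pid) {S : Finset E}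
    (hd : S.card + 2 ≤ d) (f : Finset E → ℝ) :
    ∑ R ∈ linkFaces C S 1, linkPi C d pid S 1 R * f R * localWalk C d pid S f R =
      2 * ∑ T ∈ linkFaces C S 2, linkPi C d pid S 2 T * downOp 2 f T ^ 2 -
        ∑ R ∈ linkFaces C S 1, linkPi C d pid S 1 R * f R ^ 2 := by
  have h := linkUp_adjoint hC hpid hd f (downOp 2 f)
  have h2 : ∑ T ∈ linkFaces C S 2, linkPi C d pid S 2 T * downOp 2 f T ^ 2 =
      ∑ T ∈ linkFaces C S 2, linkPi C d pid S 2 T * downOp 2 f T * downOp 2 f T :=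
    Finset.sum_congr rfl fun T _ => by ring
  rw [h2, ← h, Finset.mul_sum, ← Finset.sum_sub_distrib]
  apply Finset.sum_congr rfl
  intro R _
  simp only [localWalk, linkUpDown, Nat.reduceAdd]
  ring

/-- The down operator is a contraction, by convexity of the square. -/
theorem norm_downOp_le {C : Finset (Finset E)} {d : ℕ} {pid : Finset E → ℝ}
    (hC : IsPureComplex C d) (hpid : IsTopDist C d pid) {S : Finset E}
    (hd : S.card + 2 ≤ d) (f : Finset E → ℝ) :
    ∑ T ∈ linkFaces C S 2, linkPi C d pid S 2 T * downOp 2 f T ^ 2 ≤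
      ∑ R ∈ linkFaces C S 1, linkPi C d pid S 1 R * f R ^ 2 := by
  have hone : ∀ R ∈ linkFaces C S 1, linkPi C d pid S 1 R * f R ^ 2 =
      linkPi C d pid S 1 R * f R ^ 2 * linkUp C d pid S 1 (fun _ => 1) R := by
    intro R hR
    have := linkUp_sub_const hC hpid hd hR (fun _ => 0) (-1)
    have h0 : linkUp C d pid S 1 (fun _ => 0) R = 0 := by simp [linkUp, upWith]
    simp only [h0, sub_neg_eq_add, zero_add] at this
    rw [this, mul_one]
  rw [Finset.sum_congr rfl hone, linkUp_adjoint hC hpid hd (fun R => f R ^ 2)]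
  apply Finset.sum_le_sum
  intro T hT
  rw [mul_one]
  apply mul_le_mul_of_nonneg_left _ (linkPi_pos hC hpid hT).le
  have hcs := sq_sum_le_card_mul_sum_sq (s := T) (f := fun i => f (T.erase i))
  rw [(mem_linkFaces.1 hT).2.2] at hcs
  simp only [downOp]
  push_cast at hcs ⊢
  nlinarith

theorem norm_downOp_le_of_lamTwo_le {C : Finset (Finset E)} {d : ℕ} {pid : Finset E → ℝ}
    (hC : IsPureComplex C d) (hpid : IsTopDist C d pid) {S : Finset E}
    (hd : S.card + 2 ≤ d) {a : ℝ}
    (hloc : lamTwo (linkPi C d pid S 1) (linkFaces C S 1) (localWalk C d pid S) ≤ a)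
    (f : Finset E → ℝ) (hf : ∑ R ∈ linkFaces C S 1, linkPi C d pid S 1 R * f R = 0) :
    ∑ T ∈ linkFaces C S 2, linkPi C d pid S 2 T * downOp 2 f T ^ 2 ≤
      (1 + a) / 2 * ∑ R ∈ linkFaces C S 1, linkPi C d pid S 1 R * f R ^ 2 := by
  have hnn : ∀ f : Finset E → ℝ, 0 ≤ ∑ R ∈ linkFaces C S 1, linkPi C d pid S 1 R * f R ^ 2 :=
    fun f => Finset.sum_nonneg fun R hR => mul_nonneg (linkPi_pos hC hpid hR).le (sq_nonneg _)
  by_cases h0 : ∑ R ∈ linkFaces C S 1, linkPi C d pid S 1 R * f R ^ 2 = 0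
  · have := norm_downOp_le hC hpid hd f
    rw [h0] at this ⊢
    simpa using this
  have hpos := lt_of_le_of_ne (hnn f) (Ne.symm h0)
  have hle : (∑ R ∈ linkFaces C S 1, linkPi C d pid S 1 R * f R * localWalk C d pid S f R) /
      ∑ R ∈ linkFaces C S 1, linkPi C d pid S 1 R * f R ^ 2 ≤ a := by
    refine le_trans ?_ hloc
    unfold lamTwo
    refine le_csSup ⟨1, ?_⟩ ⟨f, hf, h0, rfl⟩
    rintro r ⟨u, -, hu, rfl⟩
    have hu' := lt_of_le_of_ne (hnn u) (Ne.symm hu)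
    rw [div_le_one hu', sum_mul_localWalk hC hpid hd]
    have := norm_downOp_le hC hpid hd u
    linarith
  rw [div_le_iff₀ hpos, sum_mul_localWalk hC hpid hd] at hle
  linarith

/-! ### Variance contraction -/

theorem pVar_eq_centred {μ : Finset E → ℝ} {dom : Finset (Finset E)}
    (hμ : ∑ x ∈ dom, μ x = 1) (f : Finset E → ℝ) (c : ℝ) (hc : ∑ x ∈ dom, μ x * f x = c) :
    pVar μ dom f = ∑ x ∈ dom, μ x * (f x - c) ^ 2 := by
  have : ∑ x ∈ dom, μ x * (f x - c) ^ 2 =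
      ∑ x ∈ dom, μ x * f x ^ 2 - 2 * c * ∑ x ∈ dom, μ x * f x + c ^ 2 * ∑ x ∈ dom, μ x := by
    rw [Finset.mul_sum, Finset.mul_sum, ← Finset.sum_sub_distrib, ← Finset.sum_add_distrib]
    exact Finset.sum_congr rfl fun x _ => by ring
  rw [this, pVar, hμ, hc]
  ring

/-- **Level-two variance contraction from local expansion.** If `2 ≤ k ≤ d`,
`S ∈ C(k-2)` and `λ₂(G_S) ≤ a` with `-1 < a < 1`, then for every `g : C_S(2) → ℝ`,
`Var_{π_{S,2}}(g) ≥ (2/(1+a)) Var_{π_{S,1}}(P_{S,1}^↑ g)`. -/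
theorem level_two_var_contraction {E : Type*} [Fintype E] [DecidableEq E]
    (C : Finset (Finset E)) (d : ℕ) (pid : Finset E → ℝ)
    (hC : IsPureComplex C d) (hpid : IsTopDist C d pid)
    (k : ℕ) (hk2 : 2 ≤ k) (hkd : k ≤ d) (S : Finset E) (hS : S ∈ faces C (k-2))
    (a : ℝ) (ha1 : -1 < a) (ha2 : a < 1)
    (hloc : lamTwo (linkPi C d pid S 1) (linkFaces C S 1) (localWalk C d pid S) ≤ a) :
    ∀ g : Finset E → ℝ,
      pVar (linkPi C d pid S 2) (linkFaces C S 2) g ≥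
        (2 / (1 + a)) * pVar (linkPi C d pid S 1) (linkFaces C S 1)
          (linkUp C d pid S 1 g) := by
  intro g
  have hSC := (Finset.mem_filter.1 hS).1
  have hScard := (Finset.mem_filter.1 hS).2
  have hd : S.card + 2 ≤ d := by omega
  -- Both levels of the link are nonempty: a top face above `S` has two elements outside `S`.
  have hne : ∀ j ≤ 2, ∃ T, T ∈ linkFaces C S j := by
    intro j hj
    obtain ⟨U, hU, hSU, hUd⟩ := hC.2.2 S hSC
    have hcard : j ≤ (U \ S).card := by rw [Finset.card_sdiff_of_subset hSU]; omega
    obtain ⟨T, hT, hTc⟩ := Finset.exists_subset_card_eq hcard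
    refine ⟨T, mem_linkFaces.2 ⟨?_, ?_, hTc⟩⟩
    · exact Finset.disjoint_iff_inter_eq_empty.1
        (Finset.disjoint_of_subset_right hT Finset.disjoint_sdiff)
    · exact hC.2.1 U hU _ (Finset.union_subset hSU (hT.trans Finset.sdiff_subset))
  obtain ⟨T₁, hT₁⟩ := hne 1 (by norm_num)
  obtain ⟨T₂, hT₂⟩ := hne 2 le_rfl
  have hone1 := sum_linkPi hC hpid hT₁
  have hone2 := sum_linkPi hC hpid hT₂
  obtain ⟨c, hc⟩ : ∃ c, ∑ T ∈ linkFaces C S 2, linkPi C d pid S 2 T * g T = c := ⟨_, rfl⟩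
  have hc1 := (sum_linkUp hC hpid hd g).trans hc
  rw [pVar_eq_centred hone1 _ c hc1, pVar_eq_centred hone2 g c hc]
  let f : Finset E → ℝ := fun R => linkUp C d pid S 1 g R - c
  have hf0 : ∑ R ∈ linkFaces C S 1, linkPi C d pid S 1 R * f R = 0 := by
    simp only [f, mul_sub, Finset.sum_sub_distrib, ← Finset.sum_mul, hc1, hone1]
    ring
  have hDf := norm_downOp_le_of_lamTwo_le hC hpid hd hloc f hf0
  have hin : ∑ R ∈ linkFaces C S 1, linkPi C d pid S 1 R * f R ^ 2 =
      ∑ T ∈ linkFaces C S 2, linkPi C d pid S 2 T * downOp 2 f T * (g T - c) := by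
    rw [← linkUp_adjoint hC hpid hd f fun T => g T - c]
    apply Finset.sum_congr rfl
    intro R hR
    rw [linkUp_sub_const hC hpid hd hR]
    ring
  have hsq : 0 ≤ ∑ T ∈ linkFaces C S 2,
      linkPi C d pid S 2 T * ((g T - c) - 2 / (1 + a) * downOp 2 f T) ^ 2 :=
    Finset.sum_nonneg fun T hT => mul_nonneg (linkPi_pos hC hpid hT).le (sq_nonneg _)
  have hexp : ∑ T ∈ linkFaces C S 2,
      linkPi C d pid S 2 T * ((g T - c) - 2 / (1 + a) * downOp 2 f T) ^ 2 =
      ∑ T ∈ linkFaces C S 2, linkPi C d pid S 2 T * (g T - c) ^ 2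
      - 2 * (2 / (1 + a)) *
        ∑ T ∈ linkFaces C S 2, linkPi C d pid S 2 T * downOp 2 f T * (g T - c)
      + (2 / (1 + a)) ^ 2 *
        ∑ T ∈ linkFaces C S 2, linkPi C d pid S 2 T * downOp 2 f T ^ 2 := by
    rw [Finset.mul_sum, Finset.mul_sum, ← Finset.sum_sub_distrib, ← Finset.sum_add_distrib]
    exact Finset.sum_congr rfl fun x _ => by ring
  rw [hexp, ← hin] at hsq
  have ha : 0 < 1 + a := by linarith
  have hmul := mul_le_mul_of_nonneg_left hDf (sq_nonneg (2 / (1 + a)))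
  have hcoef : (2 / (1 + a)) ^ 2 * ((1 + a) / 2 *
      ∑ R ∈ linkFaces C S 1, linkPi C d pid S 1 R * f R ^ 2) =
      2 / (1 + a) * ∑ R ∈ linkFaces C S 1, linkPi C d pid S 1 R * f R ^ 2 := by
    field_simp
  rw [hcoef] at hmul
  change _ ≥ 2 / (1 + a) * ∑ R ∈ linkFaces C S 1, linkPi C d pid S 1 R * f R ^ 2
  linarith
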